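/- arXiv:math/0412090 — 5 statements merged into one kernel-verified Lean document; each statement's English description precedes it below -/
import Mathlib

section
/- Let w be a positive even integer, let E be a weighted Dedekind symbol of weight w, and let n be a positive integer. Then T_n E is again a weighted Dedekind symbol of weight w; that is, (T_n E)(h,k+h) = (T_n E)(h,k) for all (h,k) ∈ ℤ⁺×ℤ, and (T_n E)(ch,ck) = c^w·(T_n E)(h,k) for all (h,k) ∈ ℤ⁺×ℤ and all c ∈ ℤ⁺. -/
/-- A weighted Dedekind symbol of weight `w`: a function `E : ℤ⁺ × ℤ → ℂ`
(encoded as `E : ℤ → ℤ → ℂ`, with conditions imposed only for positive first argument)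
satisfying `E(h, k+h) = E(h, k)` and `E(ch, ck) = c^w · E(h, k)`. -/
def IsDedekindSymbol (w : ℕ) (E : ℤ → ℤ → ℂ) : Prop :=
  (∀ h k : ℤ, 0 < h → E h (k + h) = E h k) ∧
  (∀ h k c : ℤ, 0 < h → 0 < c → E (c * h) (c * k) = (c : ℂ) ^ w * E h k)

/-- The Hecke operator `(T_n E)(h,k) = ∑_{ad = n, d > 0} ∑_{b=0}^{d-1} E(dh, ak + bh)`. -/
noncomputable def HeckeT (n : ℕ) (E : ℤ → ℤ → ℂ) : ℤ → ℤ → ℂ :=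
  fun h k => ∑ d ∈ n.divisors, ∑ b ∈ Finset.range d,
    E ((d : ℤ) * h) (((n / d : ℕ) : ℤ) * k + (b : ℤ) * h)

theorem sum_shift_aux (d : ℕ) (g : ℤ → ℂ) (hg : ∀ x, g (x + d) = g x) (a : ℕ) :
    ∑ b ∈ Finset.range d, g ((b : ℤ) + a) = ∑ b ∈ Finset.range d, g (b : ℤ) := by
  induction a with
  | zero => simp
  | succ a ih =>
    rw [← ih]
    have h1 := Finset.sum_range_succ (fun b : ℕ => g ((b : ℤ) + a)) d
    have h2 := Finset.sum_range_succ' (fun b : ℕ => g ((b : ℤ) + a)) d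
    have h3 : g ((d : ℤ) + a) = g (((0 : ℕ) : ℤ) + a) := by
      rw [add_comm, hg]; simp
    rw [h1, h3] at h2
    rw [add_right_cancel h2]
    refine Finset.sum_congr rfl fun b _ => ?_
    congr 1
    push_cast
    ring

theorem heckeT_isDedekindSymbol (w : ℕ) (hw : Even w) (hw0 : 0 < w)
    (n : ℕ) (hn : 0 < n) (E : ℤ → ℤ → ℂ) (hE : IsDedekindSymbol w E) :
    IsDedekindSymbol w (HeckeT n E) := by
  obtain ⟨h1, h2⟩ := hE
  refine ⟨fun h k hh => ?_, fun h k c hh hc => ?_⟩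
  · unfold HeckeT
    refine Finset.sum_congr rfl fun d hd => ?_
    have hd0 : 0 < d := Nat.pos_of_mem_divisors hd
    rw [← sum_shift_aux d (fun x => E ((d : ℤ) * h) (((n / d : ℕ) : ℤ) * k + x * h)) _ (n / d)]
    · refine Finset.sum_congr rfl fun b _ => ?_
      congr 1
      ring
    · intro x
      have := h1 ((d : ℤ) * h) (((n / d : ℕ) : ℤ) * k + x * h) (by positivity)
      rw [← this]
      congr 1
      ring
  · unfold HeckeT
    rw [Finset.mul_sum]
    refine Finset.sum_congr rfl fun d hd => ?_
    have hd0 : 0 < d := Nat.pos_of_mem_divisors hd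
    rw [Finset.mul_sum]
    refine Finset.sum_congr rfl fun b _ => ?_
    rw [← h2 _ _ c (by positivity) hc]
    congr 1 <;> ring
end

section
/- Let w be a positive even integer and n a positive integer. If E is an odd (resp. even) weighted Dedekind symbol of weight w, then T_n E is also odd (resp. even); that is, if E(h,−k) = −E(h,k) for all (h,k) ∈ ℤ⁺×ℤ then (T_n E)(h,−k) = −(T_n E)(h,k) for all (h,k) ∈ ℤ⁺×ℤ, and if E(h,−k) = E(h,k) for all (h,k) then (T_n E)(h,−k) = (T_n E)(h,k) for all (h,k). -/
theorem heckeT_aux (w : ℕ) (n : ℕ) (E : ℤ → ℤ → ℂ) (hE : IsDedekindSymbol w E) (e : ℂ)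
    (he : ∀ h k : ℤ, 0 < h → E h (-k) = e * E h k) (h k : ℤ) (hh : 0 < h) :
    HeckeT n E h (-k) = e * HeckeT n E h k := by
  unfold HeckeT
  rw [Finset.mul_sum]
  refine Finset.sum_congr rfl fun d hd => ?_
  have hd0 : 0 < d := Nat.pos_of_mem_divisors hd
  have hdh : 0 < (d : ℤ) * h := mul_pos (by exact_mod_cast hd0) hh
  generalize ((n / d : ℕ) : ℤ) = a
  rw [Finset.mul_sum, ← Finset.sum_range_reflect]
  have h1 : ∀ b ∈ Finset.range d,
      E ((d : ℤ) * h) (a * -k + ((d - 1 - b : ℕ) : ℤ) * h)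
        = e * E ((d : ℤ) * h) (a * k + ((b + 1 : ℕ) : ℤ) * h) := by
    intro b hb
    have hb' := Finset.mem_range.1 hb
    rw [← he _ _ hdh, ← hE.1 _ (-(a * k + ((b + 1 : ℕ) : ℤ) * h)) hdh]
    congr 1
    have : ((d - 1 - b : ℕ) : ℤ) = d - 1 - b := by omega
    rw [this]
    push_cast
    ring
  rw [Finset.sum_congr rfl h1]
  have h2 := Finset.sum_range_succ (fun b : ℕ => e * E ((d : ℤ) * h) (a * k + (b : ℤ) * h)) d
  rw [Finset.sum_range_succ'] at h2
  have h3 : E ((d : ℤ) * h) (a * k + (d : ℤ) * h) = E ((d : ℤ) * h) (a * k + ((0 : ℕ) : ℤ) * h) := by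
    rw [hE.1 _ _ hdh]; simp
  rw [h3] at h2
  exact add_right_cancel h2

theorem heckeT_parity (w : ℕ) (hw : Even w) (hw0 : 0 < w)
    (n : ℕ) (hn : 0 < n) (E : ℤ → ℤ → ℂ) (hE : IsDedekindSymbol w E) :
    ((∀ h k : ℤ, 0 < h → E h (-k) = -E h k) →
      ∀ h k : ℤ, 0 < h → HeckeT n E h (-k) = -HeckeT n E h k) ∧
    ((∀ h k : ℤ, 0 < h → E h (-k) = E h k) →
      ∀ h k : ℤ, 0 < h → HeckeT n E h (-k) = HeckeT n E h k) := by
  refine ⟨fun he h k hh => ?_, fun he h k hh => ?_⟩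
  · simpa using heckeT_aux w n E hE (-1) (by simpa using he) h k hh
  · simpa using heckeT_aux w n E hE 1 (by simpa using he) h k hh
end

section
/- Let w be a positive even integer and let E and E' be weighted Dedekind symbols of weight w satisfying E(h,k) − E(k,−h) = E'(h,k) − E'(k,−h) for all h,k ∈ ℤ⁺. Then there exists a constant c ∈ ℂ such that E(h,k) − E'(h,k) = c·gcd(h,k)^w for all (h,k) ∈ ℤ⁺×ℤ. -/
theorem dedekindSymbols_with_same_reciprocity (w : ℕ) (hw : Even w) (hw0 : 0 < w)
    (E E' : ℤ → ℤ → ℂ) (hE : IsDedekindSymbol w E) (hE' : IsDedekindSymbol w E')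
    (hrec : ∀ h k : ℤ, 0 < h → 0 < k → E h k - E k (-h) = E' h k - E' k (-h)) :
    ∃ c : ℂ, ∀ h k : ℤ, 0 < h →
      E h k - E' h k = c * ((Int.gcd h k : ℕ) : ℂ) ^ w := by
  obtain ⟨F, hF⟩ : ∃ F : ℤ → ℤ → ℂ, ∀ h k, F h k = E h k - E' h k := ⟨_, fun _ _ => rfl⟩
  have p1 : ∀ h k : ℤ, 0 < h → F h (k + h) = F h k := fun h k hh => by
    rw [hF, hF, hE.1 h k hh, hE'.1 h k hh]
  have p2 : ∀ h : ℤ, 0 < h → F h 0 = (h : ℂ) ^ w * F 1 0 := fun h hh => by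
    have a := hE.2 1 0 h one_pos hh
    have b := hE'.2 1 0 h one_pos hh
    rw [mul_one, mul_zero] at a b
    rw [hF, hF, a, b]; ring
  have p3 : ∀ h k : ℤ, 0 < h → 0 < k → F h k = F k (-h) := fun h k hh hk => by
    rw [hF, hF]; linear_combination hrec h k hh hk
  have p4 : ∀ h k n : ℤ, 0 < h → F h (k + h * n) = F h k := fun h k n hh => by
    induction n using Int.induction_on with
    | zero => simp
    | succ i ih => rw [← ih, ← p1 h (k + h * i) hh]; congr 1; ring
    | pred i ih => rw [← ih, ← p1 h (k + h * (-i - 1)) hh]; congr 1; ring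
  refine ⟨F 1 0, ?_⟩
  have key : ∀ n : ℕ, ∀ h k : ℤ, 0 < h → h.toNat = n →
      F h k = F 1 0 * ((Int.gcd h k : ℕ) : ℂ) ^ w := by
    intro n
    induction n using Nat.strong_induction_on with
    | _ n ih =>
    intro h k hh hn
    have e : F h k = F h (k % h) := by
      rw [← p4 h (k % h) (k / h) hh, Int.emod_add_mul_ediv]
    have g : Int.gcd h k = Int.gcd (k % h) (-h) := by
      rw [Int.gcd_neg, Int.gcd_comm h k, Int.gcd_emod]
    have r0 := Int.emod_nonneg k hh.ne'
    have r1 := Int.emod_lt_of_pos k hh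
    rw [e, g]
    rcases r0.eq_or_lt with h0 | h0
    · rw [← h0, p2 h hh, Int.gcd_neg, Int.gcd_zero_left]
      have : ((h.natAbs : ℕ) : ℂ) = (h : ℂ) := by
        have : ((h.natAbs : ℕ) : ℤ) = h := by omega
        rw [← Int.cast_natCast, this]
      rw [this]; ring
    · rw [p3 _ _ hh h0]
      exact ih (k % h).toNat (by omega) _ _ h0 rfl
  intro h k hh
  rw [← hF]
  exact key _ h k hh rfl
end

section
/- Let w be a positive even integer and let g(X,Y) be a homogeneous polynomial of degree w+2 with complex coefficients satisfying the polynomial identity X·g(X+Y,Y) + Y·g(X,X+Y) = (X+Y)·g(X,Y). Then there exists a weighted Dedekind symbol E of weight w such that E(h,k) − E(k,−h) = (g(h,k) − g(1,1)·gcd(h,k)^{w+2})/(hk) for all h,k ∈ ℤ⁺. -/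
open MvPolynomial

noncomputable def dedAux (f : ℤ → ℤ → ℂ) (h k : ℤ) : ℂ :=
  if hh : 0 < h ∧ k % h ≠ 0 then f h (k % h) + dedAux f (k % h) (-h) else 0
termination_by h.toNat
decreasing_by
  have h1 := Int.emod_lt_of_pos k hh.1
  have h2 := Int.emod_nonneg k hh.1.ne'
  omega

theorem dedAux_add (f : ℤ → ℤ → ℂ) (h k : ℤ) : dedAux f h (k + h) = dedAux f h k := by
  rw [dedAux, dedAux.eq_def f h k]
  simp only [Int.add_emod_right]

theorem dedAux_zero (f : ℤ → ℤ → ℂ) (h : ℤ) : dedAux f h 0 = 0 := by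
  rw [dedAux]; simp

theorem dedAux_lt (f : ℤ → ℤ → ℂ) (h k : ℤ) (hk : 0 < k) (hkh : k < h) :
    dedAux f h k = f h k + dedAux f k (-h) := by
  have e : k % h = k := Int.emod_eq_of_lt hk.le hkh
  rw [dedAux, e, dif_pos ⟨by omega, by omega⟩]

theorem dedAux_mul (f : ℤ → ℤ → ℂ) (w : ℕ) (c : ℤ) (hc : 0 < c)
    (hf : ∀ h k : ℤ, 0 < h → 0 < k → f (c * h) (c * k) = (c : ℂ) ^ w * f h k) (n : ℕ) :
    ∀ h k : ℤ, 0 < h → h.toNat ≤ n → dedAux f (c * h) (c * k) = (c : ℂ) ^ w * dedAux f h k := by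
  induction n with
  | zero => intro h k h0 hn; omega
  | succ n ih =>
    intro h k h0 hn
    have hch : 0 < c * h := mul_pos hc h0
    have h1 := Int.emod_lt_of_pos k h0
    have h2 := Int.emod_nonneg k h0.ne'
    rw [dedAux, dedAux.eq_def f h k, Int.mul_emod_mul_of_pos _ _ hc]
    by_cases hr : k % h = 0
    · simp [hr]
    · have : c * (k % h) ≠ 0 := mul_ne_zero hc.ne' hr
      rw [dif_pos ⟨hch, this⟩, dif_pos ⟨h0, hr⟩, hf _ _ h0 (by omega), ← mul_neg,
        ih _ _ (by omega) (by omega)]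
      ring

theorem dedAux_rec (f : ℤ → ℤ → ℂ) (hd : ∀ h : ℤ, 0 < h → f h h = 0)
    (hf : ∀ h k : ℤ, 0 < h → 0 < k → f (h + k) k + f h (h + k) = f h k) (n : ℕ) :
    ∀ h k : ℤ, 0 < h → 0 < k → k.toNat ≤ n → dedAux f h k - dedAux f k (-h) = f h k := by
  induction n with
  | zero => intro h k h0 hk hn; omega
  | succ n ih =>
    intro h k h0 hk hn
    rcases lt_trichotomy k h with hl | hl | hl
    · rw [dedAux_lt f h k hk hl]; ring
    · subst hl
      have a := dedAux_add f k 0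
      have b := dedAux_add f k (-k)
      rw [neg_add_cancel] at b
      rw [zero_add] at a
      rw [a, b, hd _ hk, sub_self]
    · have a := dedAux_add f h (k - h)
      have b := dedAux_add f k (-h)
      have c := dedAux_lt f k (k - h) (by omega) (by omega)
      have d := dedAux_add f (k - h) (-k)
      have e := ih h (k - h) h0 (by omega) (by omega)
      have i := hf h (k - h) h0 (by omega)
      rw [show k - h + h = k by ring] at a
      rw [show -h + k = k - h by ring] at b
      rw [show -k + (k - h) = -h by ring] at d
      rw [show h + (k - h) = k by ring] at i
      linear_combination a + b - c + d + e - i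

/-- Given a homogeneous polynomial `g` of degree `w+2` with
`X·g(X+Y,Y) + Y·g(X,X+Y) = (X+Y)·g(X,Y)`, there is a weighted Dedekind symbol of
weight `w` with reciprocity function `(g(h,k) − g(1,1)·gcd(h,k)^{w+2})/(hk)`. -/
theorem exists_dedekindSymbol_of_laurent_reciprocity (w : ℕ) (hw : Even w) (hw0 : 0 < w)
    (g : MvPolynomial (Fin 2) ℂ) (hg : g.IsHomogeneous (w + 2))
    (hid : ∀ x y : ℂ,
      x * eval ![x + y, y] g + y * eval ![x, x + y] g = (x + y) * eval ![x, y] g) :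
    ∃ E : ℤ → ℤ → ℂ, IsDedekindSymbol w E ∧
      ∀ h k : ℤ, 0 < h → 0 < k →
        E h k - E k (-h) =
          (eval ![(h : ℂ), (k : ℂ)] g
            - eval ![1, 1] g * ((Int.gcd h k : ℕ) : ℂ) ^ (w + 2)) / ((h : ℂ) * (k : ℂ)) := by
  have hom : ∀ c x y : ℂ, eval ![c * x, c * y] g = c ^ (w + 2) * eval ![x, y] g := by
    intro c x y
    have e : (![c * x, c * y] : Fin 2 → ℂ) = c • ![x, y] := by simp
    rw [e, eval_eq, eval_eq, Finset.mul_sum]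
    refine Finset.sum_congr rfl fun d hdm => ?_
    have hdeg := hg (mem_support_iff.mp hdm)
    simp only [Finsupp.weight_apply, Pi.one_apply, smul_eq_mul, mul_one] at hdeg
    rw [Finsupp.sum] at hdeg
    simp only [Pi.smul_apply, smul_eq_mul, mul_pow, Finset.prod_mul_distrib,
      Finset.prod_pow_eq_pow_sum, hdeg]
    ring
  set f : ℤ → ℤ → ℂ := fun h k => (eval ![(h : ℂ), (k : ℂ)] g
            - eval ![1, 1] g * ((Int.gcd h k : ℕ) : ℂ) ^ (w + 2)) / ((h : ℂ) * (k : ℂ)) with hfdef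
  refine ⟨dedAux f, ⟨fun h k _ => dedAux_add f h k, fun h k c h0 hc =>
    dedAux_mul f w c hc ?_ h.toNat h k h0 le_rfl⟩, fun h k h0 hk =>
    dedAux_rec f ?_ ?_ k.toNat h k h0 hk le_rfl⟩
  · intro h k h0 hk
    have c1 : (c : ℂ) ≠ 0 := by exact_mod_cast hc.ne'
    have h1 : (h : ℂ) ≠ 0 := by exact_mod_cast h0.ne'
    have k1 : (k : ℂ) ≠ 0 := by exact_mod_cast hk.ne'
    have e : ((Int.gcd (c * h) (c * k) : ℕ) : ℂ) = c * ((Int.gcd h k : ℕ) : ℂ) := by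
      rw [Int.gcd_mul_left]
      push_cast
      congr 1
      rw [← Int.cast_natCast, Int.natAbs_of_nonneg hc.le]
    simp only [hfdef, e]
    push_cast
    rw [hom]
    field_simp
    ring
  · intro h h0
    have e : ((Int.gcd h h : ℕ) : ℂ) = h := by
      rw [Int.gcd_self, ← Int.cast_natCast, Int.natAbs_of_nonneg h0.le]
    have := hom h 1 1
    simp only [mul_one] at this
    simp only [hfdef, e, this]
    rw [mul_comm, sub_self, zero_div]
  · intro h k h0 hk
    have h1 : (h : ℂ) ≠ 0 := by exact_mod_cast h0.ne'
    have k1 : (k : ℂ) ≠ 0 := by exact_mod_cast hk.ne'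
    have s1 : (h : ℂ) + k ≠ 0 := by exact_mod_cast (add_pos h0 hk).ne'
    have e1 : Int.gcd (h + k) k = Int.gcd h k := by simp
    have e2 : Int.gcd h (h + k) = Int.gcd h k := by simp
    simp only [hfdef, e1, e2]
    push_cast
    have := hid h k
    field_simp
    linear_combination this
end

section
/- Let w be a positive even integer and let n be an even integer with 0 < n < w. Then E_{w,n} is an odd weighted Dedekind symbol of weight w: E_{w,n}(h,k+h)=E_{w,n}(h,k) and E_{w,n}(ch,ck)=c^w·E_{w,n}(h,k) for all (h,k) ∈ ℤ⁺×ℤ and c ∈ ℤ⁺, and E_{w,n}(h,−k)=−E_{w,n}(h,k) for all (h,k) ∈ ℤ⁺×ℤ. Moreover E_{w,n} satisfies the reciprocity law E_{w,n}(h,k) − E_{w,n}(k,−h) = S_{w,n}(h,k) for all h,k ∈ ℤ⁺. -/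
open scoped Classical

/-- The `m`-th Bernoulli function `B̄_m(x) = B_m(x − ⌊x⌋)` (ℂ-valued, rational argument). -/
noncomputable def Bbar (m : ℕ) (x : ℚ) : ℂ :=
  ((Polynomial.bernoulli m).eval (x - ⌊x⌋) : ℚ)

/-- The `m`-th Bernoulli polynomial evaluated at a complex number. -/
noncomputable def Bpoly (m : ℕ) (x : ℂ) : ℂ :=
  Polynomial.aeval x (Polynomial.bernoulli m)

/-- The `m`-th Bernoulli number `B_m = B_m(0)`. -/
noncomputable def Bnum (m : ℕ) : ℂ := ((bernoulli m : ℚ) : ℂ)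

/-- The finite sum `I_{w,n}(h,k) = (1/2)·∑ sgn(k/h+b/a)·(ak+bh)^{w-n}·(ck+dh)^n`,
over quadruples `(a,b,c,d) ∈ ℤ⁴` with `ad−bc = 1`, `a ≠ 0`, `c ≠ 0`,
`|b+⌊k/h+1/2⌋a| ≤ |a| ≤ h`, `|d+⌊k/h+1/2⌋c| ≤ |c| ≤ h` and `(k/h+b/a)(k/h+d/c) < 0`;
the factor `1/2` accounts for the quotient of `SL(2,ℤ)` by `±1`. -/
noncomputable def Iwn (w n : ℕ) (h k : ℤ) : ℂ :=
  (1 / 2) * ∑ᶠ p : ℤ × ℤ × ℤ × ℤ,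
    if p.1 * p.2.2.2 - p.2.1 * p.2.2.1 = 1 ∧ p.1 ≠ 0 ∧ p.2.2.1 ≠ 0 ∧
        |p.2.1 + ⌊(k : ℚ) / h + 1 / 2⌋ * p.1| ≤ |p.1| ∧ |p.1| ≤ h ∧
        |p.2.2.2 + ⌊(k : ℚ) / h + 1 / 2⌋ * p.2.2.1| ≤ |p.2.2.1| ∧ |p.2.2.1| ≤ h ∧
        ((k : ℚ) / h + p.2.1 / p.1) * ((k : ℚ) / h + p.2.2.2 / p.2.2.1) < 0 then
      (Real.sign ((k : ℝ) / h + (p.2.1 : ℝ) / p.1) : ℂ) *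
        ((p.1 * k + p.2.1 * h : ℤ) : ℂ) ^ (w - n) * ((p.2.2.1 * k + p.2.2.2 * h : ℤ) : ℂ) ^ n
    else 0

/-- `E_{w,n}` for even `n`. -/
noncomputable def EwnEven (w n : ℕ) (h k : ℤ) : ℂ :=
  Iwn w n h k + Bbar (n + 1) ((k : ℚ) / h) / ((n : ℂ) + 1) * (h : ℂ) ^ w
    - Bbar (w - n + 1) ((k : ℚ) / h) / (((w - n : ℕ) : ℂ) + 1) * (h : ℂ) ^ w

/-- `S_{w,n}` for even `n`. -/
noncomputable def SwnEven (w n : ℕ) (h k : ℤ) : ℂ :=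
  Bpoly (n + 1) ((k : ℂ) / h) / ((n : ℂ) + 1) * (h : ℂ) ^ w
    + Bpoly (n + 1) ((h : ℂ) / k) / ((n : ℂ) + 1) * (k : ℂ) ^ w
    - Bpoly (w - n + 1) ((k : ℂ) / h) / (((w - n : ℕ) : ℂ) + 1) * (h : ℂ) ^ w
    - Bpoly (w - n + 1) ((h : ℂ) / k) / (((w - n : ℕ) : ℂ) + 1) * (k : ℂ) ^ w

noncomputable def TT (m n : ℕ) (h k : ℤ) (p : ℤ × ℤ × ℤ × ℤ) : ℂ :=
  if p.1 * p.2.2.2 - p.2.1 * p.2.2.1 = 1 ∧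
      (p.1 * p.2.2.1) * ((p.1 * k + p.2.1 * h) * (p.2.2.1 * k + p.2.2.2 * h)) < 0 then
    ((Int.sign (p.1 * (p.1 * k + p.2.1 * h)) : ℤ) : ℂ) *
      ((p.1 * k + p.2.1 * h : ℤ) : ℂ) ^ m * ((p.2.2.1 * k + p.2.2.2 * h : ℤ) : ℂ) ^ n
  else 0

lemma TT_mk (m n : ℕ) (h k a b c d : ℤ) : TT m n h k (a, b, c, d) =
    if a * d - b * c = 1 ∧ (a * c) * ((a * k + b * h) * (c * k + d * h)) < 0 then
    ((Int.sign (a * (a * k + b * h)) : ℤ) : ℂ) *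
      ((a * k + b * h : ℤ) : ℂ) ^ m * ((c * k + d * h : ℤ) : ℂ) ^ n
    else 0 := rfl

lemma aux_split (a b c d h k : ℤ) (hh : 0 < h) (hdet : a * d - b * c = 1)
    (hneg : (a * c) * ((a * k + b * h) * (c * k + d * h)) < 0) :
    |a| * |c * k + d * h| + |c| * |a * k + b * h| = h ∧ 1 ≤ |a| ∧ 1 ≤ |c| ∧
      1 ≤ |a * k + b * h| ∧ 1 ≤ |c * k + d * h| := by
  set u := a * k + b * h with hu
  set v := c * k + d * h with hv
  have e : a * v - c * u = h := by
    have : a * v - c * u = (a * d - b * c) * h := by rw [hu, hv]; ring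
    rw [this, hdet, one_mul]
  have e2 : (a * v) * (c * u) < 0 := by
    have : (a * v) * (c * u) = (a * c) * (u * v) := by ring
    rw [this]; exact hneg
  have ha : a ≠ 0 := by rintro rfl; simp at hneg
  have hc : c ≠ 0 := by rintro rfl; simp at hneg
  have hu0 : u ≠ 0 := by intro H; simp [H] at hneg
  have hv0 : v ≠ 0 := by intro H; simp [H] at hneg
  refine ⟨?_, Int.one_le_abs ha, Int.one_le_abs hc, Int.one_le_abs hu0, Int.one_le_abs hv0⟩
  rw [← abs_mul, ← abs_mul]
  rcases mul_neg_iff.mp e2 with ⟨h1, h2⟩ | ⟨h1, h2⟩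
  · rw [abs_of_pos h1, abs_of_neg h2]; linarith
  · linarith

lemma aux_bound (a b c d h k : ℤ) (hh : 0 < h) (hdet : a * d - b * c = 1)
    (hneg : (a * c) * ((a * k + b * h) * (c * k + d * h)) < 0) :
    |a| ≤ h ∧ |c| ≤ h ∧ |a * k + b * h| + 1 ≤ h ∧ |c * k + d * h| + 1 ≤ h := by
  obtain ⟨e, h1, h2, h3, h4⟩ := aux_split a b c d h k hh hdet hneg
  refine ⟨?_, ?_, ?_, ?_⟩ <;> nlinarith

lemma aux_near (a b h k N : ℤ) (hh : 0 < h) (ha : 1 ≤ |a|) (hu : |a * k + b * h| + 1 ≤ h)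
    (hN : |2 * (k - N * h)| ≤ h) : |b + N * a| ≤ |a| := by
  have e : (b + N * a) * h = (a * k + b * h) - a * (k - N * h) := by ring
  have e1 : |b + N * a| * h ≤ |a * k + b * h| + |a| * |k - N * h| := by
    calc |b + N * a| * h = |(b + N * a) * h| := by rw [abs_mul, abs_of_pos hh]
      _ ≤ _ := by rw [e, ← abs_mul]; exact abs_sub _ _
  rw [abs_mul] at hN
  simp only [Nat.abs_ofNat] at hN
  have e2 : 2 * (|b + N * a| * h) ≤ 2 * (h - 1) + |a| * h := by nlinarith
  by_contra hc
  push Not at hc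
  have : |a| + 1 ≤ |b + N * a| := hc
  nlinarith

lemma aux_big (a b h k : ℤ) (hh : 0 < h) (ha : |a| ≤ h) (hu : |a * k + b * h| + 1 ≤ h) :
    |b| ≤ 1 + |k| := by
  have e : b * h = (a * k + b * h) - a * k := by ring
  have e1 : |b| * h ≤ |a * k + b * h| + |a| * |k| := by
    calc |b| * h = |b * h| := by rw [abs_mul, abs_of_pos hh]
      _ ≤ _ := by rw [e, ← abs_mul]; exact (abs_sub _ _).trans (by simp)
  have : |a| * |k| ≤ h * |k| := by gcongr
  nlinarith [abs_nonneg k]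

lemma floor_near (h k : ℤ) (hh : 0 < h) : |2 * (k - ⌊(k : ℚ) / h + 1 / 2⌋ * h)| ≤ h := by
  have hq : (0 : ℚ) < h := by exact_mod_cast hh
  set N := ⌊(k : ℚ) / h + 1 / 2⌋
  have h1 : (N : ℚ) ≤ (k : ℚ) / h + 1 / 2 := Int.floor_le _
  have h2 : (k : ℚ) / h + 1 / 2 < N + 1 := Int.lt_floor_add_one _
  have e : (k : ℚ) / h * h = k := by field_simp
  have h1' : (N : ℚ) * h ≤ k + h / 2 := by nlinarith
  have h2' : (k : ℚ) + h / 2 ≤ N * h + h := by nlinarith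
  rw [abs_le]
  constructor
  · have : (-h : ℚ) ≤ 2 * (k - N * h) := by linarith
    exact_mod_cast this
  · have : 2 * (k - N * h) ≤ (h : ℚ) := by linarith
    exact_mod_cast this

lemma sign_div_eq (a u h k b : ℤ) (hh : 0 < h) (ha : a ≠ 0) (hu : a * k + b * h = u) :
    (Real.sign ((k : ℝ) / h + (b : ℝ) / a)) = ((Int.sign (a * u) : ℤ) : ℝ) := by
  have hh' : (0 : ℝ) < h := by exact_mod_cast hh
  have ha' : (a : ℝ) ≠ 0 := by exact_mod_cast ha
  have e : (k : ℝ) / h + (b : ℝ) / a = ((a * u : ℤ) : ℝ) / (h * a ^ 2) := by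
    rw [← hu]; push_cast; field_simp
  have hp : (0 : ℝ) < h * a ^ 2 := by positivity
  rw [e]
  rcases lt_trichotomy (a * u) 0 with H | H | H
  · rw [Int.sign_eq_neg_one_of_neg H, Real.sign_of_neg]
    · simp
    · exact div_neg_of_neg_of_pos (by exact_mod_cast H) hp
  · rw [H]; simp
  · rw [Int.sign_eq_one_of_pos H, Real.sign_of_pos]
    · simp
    · exact div_pos (by exact_mod_cast H) hp

lemma cond_iff (a b c d h k : ℤ) (hh : 0 < h) (ha : a ≠ 0) (hc : c ≠ 0) :
    ((k : ℚ) / h + b / a) * ((k : ℚ) / h + d / c) < 0 ↔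
      (a * c) * ((a * k + b * h) * (c * k + d * h)) < 0 := by
  have hh' : (0 : ℚ) < h := by exact_mod_cast hh
  have ha' : (a : ℚ) ≠ 0 := by exact_mod_cast ha
  have hc' : (c : ℚ) ≠ 0 := by exact_mod_cast hc
  have e : ((k : ℚ) / h + b / a) * ((k : ℚ) / h + d / c) =
      (((a * c) * ((a * k + b * h) * (c * k + d * h)) : ℤ) : ℚ) / (h * a * c) ^ 2 := by
    push_cast; field_simp
  have hp : (0 : ℚ) < (h * a * c) ^ 2 := by positivity
  rw [e, div_neg_iff]
  constructor
  · rintro (⟨_, H⟩ | ⟨H, _⟩)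
    · linarith
    · exact_mod_cast H
  · intro H
    exact Or.inr ⟨by exact_mod_cast H, hp⟩

lemma Iwn_eq (w n : ℕ) (h k : ℤ) (hh : 0 < h) :
    Iwn w n h k = (1 / 2) * ∑ᶠ p, TT (w - n) n h k p := by
  unfold Iwn
  congr 1
  apply finsum_congr
  rintro ⟨a, b, c, d⟩
  simp only [TT]
  by_cases H : a * d - b * c = 1 ∧ (a * c) * ((a * k + b * h) * (c * k + d * h)) < 0
  · obtain ⟨hdet, hneg⟩ := H
    have ha : a ≠ 0 := by rintro rfl; simp at hneg
    have hc : c ≠ 0 := by rintro rfl; simp at hneg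
    obtain ⟨b1, b2, b3, b4⟩ := aux_bound a b c d h k hh hdet hneg
    have N := floor_near h k hh
    rw [if_pos, if_pos ⟨hdet, hneg⟩, sign_div_eq a _ h k b hh ha rfl]
    · simp
    · exact ⟨hdet, ha, hc, aux_near a b h k _ hh (Int.one_le_abs ha) b3 N, b1,
        aux_near c d h k _ hh (Int.one_le_abs hc) b4 N, b2,
        (cond_iff a b c d h k hh ha hc).2 hneg⟩
  · rw [if_neg H, if_neg]
    rintro ⟨hdet, ha, hc, -, -, -, -, hneg⟩
    exact H ⟨hdet, (cond_iff a b c d h k hh ha hc).1 hneg⟩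

lemma TT_finite (m n : ℕ) (h k : ℤ) (hh : 0 < h) : (Function.support (TT m n h k)).Finite := by
  apply Set.Finite.subset
    ((Set.finite_Icc (-h) h).prod ((Set.finite_Icc (-(1 + |k|)) (1 + |k|)).prod
      ((Set.finite_Icc (-h) h).prod (Set.finite_Icc (-(1 + |k|)) (1 + |k|)))))
  rintro ⟨a, b, c, d⟩ hp
  have H : a * d - b * c = 1 ∧ (a * c) * ((a * k + b * h) * (c * k + d * h)) < 0 := by
    by_contra H
    exact hp (if_neg H)
  obtain ⟨b1, b2, b3, b4⟩ := aux_bound a b c d h k hh H.1 H.2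
  have b5 := aux_big a b h k hh b1 b3
  have b6 := aux_big c d h k hh b2 b4
  exact ⟨abs_le.1 b1, abs_le.1 b5, abs_le.1 b2, abs_le.1 b6⟩

/-- shift -/
def eShift : (ℤ × ℤ × ℤ × ℤ) ≃ (ℤ × ℤ × ℤ × ℤ) where
  toFun p := (p.1, p.2.1 + p.1, p.2.2.1, p.2.2.2 + p.2.2.1)
  invFun p := (p.1, p.2.1 - p.1, p.2.2.1, p.2.2.2 - p.2.2.1)
  left_inv p := by simp
  right_inv p := by simp

/-- reflection -/
def eRefl : (ℤ × ℤ × ℤ × ℤ) ≃ (ℤ × ℤ × ℤ × ℤ) where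
  toFun p := (p.1, -p.2.1, -p.2.2.1, p.2.2.2)
  invFun p := (p.1, -p.2.1, -p.2.2.1, p.2.2.2)
  left_inv p := by simp
  right_inv p := by simp

/-- rotation -/
def eRot : (ℤ × ℤ × ℤ × ℤ) ≃ (ℤ × ℤ × ℤ × ℤ) where
  toFun p := (-p.2.1, p.1, -p.2.2.2, p.2.2.1)
  invFun p := (p.2.1, -p.1, p.2.2.2, -p.2.2.1)
  left_inv p := by simp
  right_inv p := by simp

lemma TT_shift (m n : ℕ) (h k : ℤ) (p) : TT m n h (k + h) p = TT m n h k (eShift p) := by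
  obtain ⟨a, b, c, d⟩ := p
  change _ = TT m n h k (a, b + a, c, d + c)
  rw [TT_mk, TT_mk]
  have e1 : a * (k + h) + b * h = a * k + (b + a) * h := by ring
  have e2 : c * (k + h) + d * h = c * k + (d + c) * h := by ring
  have e3 : a * (d + c) - (b + a) * c = a * d - b * c := by ring
  rw [e1, e2, e3]

lemma TT_scale (m n : ℕ) (h k c : ℤ) (hc : 0 < c) (p) :
    TT m n (c * h) (c * k) p = (c : ℂ) ^ (m + n) * TT m n h k p := by
  obtain ⟨x, y, z, t⟩ := p
  simp only [TT]
  have e1 : x * (c * k) + y * (c * h) = c * (x * k + y * h) := by ring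
  have e2 : z * (c * k) + t * (c * h) = c * (z * k + t * h) := by ring
  have e3 : (x * z) * ((c * (x * k + y * h)) * (c * (z * k + t * h))) =
    c ^ 2 * ((x * z) * ((x * k + y * h) * (z * k + t * h))) := by ring
  have e4 : x * (c * (x * k + y * h)) = c * (x * (x * k + y * h)) := by ring
  have hc2 : 0 < c ^ 2 := by positivity
  rw [e1, e2, e3, e4, Int.sign_mul, Int.sign_eq_one_of_pos hc, one_mul]
  have e5 : c ^ 2 * ((x * z) * ((x * k + y * h) * (z * k + t * h))) < 0 ↔
    ((x * z) * ((x * k + y * h) * (z * k + t * h))) < 0 := by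
    constructor
    · intro H; by_contra H2; push Not at H2; have := mul_nonneg hc2.le H2; linarith
    · intro H; exact mul_neg_of_pos_of_neg hc2 H
  simp only [e5]
  split_ifs
  · rw [Int.cast_mul, Int.cast_mul, mul_pow, mul_pow]; ring
  · simp

lemma TT_refl (m n : ℕ) (hm : Even m) (h k : ℤ) (p) :
    TT m n h (-k) p = - TT m n h k (eRefl p) := by
  obtain ⟨a, b, c, d⟩ := p
  change _ = - TT m n h k (a, -b, -c, d)
  rw [TT_mk, TT_mk]
  have e1 : a * (-k) + b * h = -(a * k + (-b) * h) := by ring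
  have e2 : c * (-k) + d * h = (-c) * k + d * h := by ring
  have e3 : a * d - (-b) * (-c) = a * d - b * c := by ring
  have e4 : a * c * (-(a * k + (-b) * h) * ((-c) * k + d * h)) =
    a * (-c) * ((a * k + (-b) * h) * ((-c) * k + d * h)) := by ring
  rw [e1, e2, e3, e4, mul_neg a (a * k + (-b) * h), Int.sign_neg]
  split_ifs
  · push_cast; rw [hm.neg_pow]; ring
  · simp

/-- the rotated summand -/
noncomputable def UU (m n : ℕ) (h k : ℤ) (p : ℤ × ℤ × ℤ × ℤ) : ℂ :=
  if p.1 * p.2.2.2 - p.2.1 * p.2.2.1 = 1 ∧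
      (p.2.1 * p.2.2.2) * ((p.1 * k + p.2.1 * h) * (p.2.2.1 * k + p.2.2.2 * h)) < 0 then
    ((Int.sign (p.2.1 * (p.1 * k + p.2.1 * h)) : ℤ) : ℂ) *
      ((p.1 * k + p.2.1 * h : ℤ) : ℂ) ^ m * ((p.2.2.1 * k + p.2.2.2 * h : ℤ) : ℂ) ^ n
  else 0

lemma UU_mk (m n : ℕ) (h k a b c d : ℤ) : UU m n h k (a, b, c, d) =
    if a * d - b * c = 1 ∧ (b * d) * ((a * k + b * h) * (c * k + d * h)) < 0 then
    ((Int.sign (b * (a * k + b * h)) : ℤ) : ℂ) *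
      ((a * k + b * h : ℤ) : ℂ) ^ m * ((c * k + d * h : ℤ) : ℂ) ^ n
    else 0 := rfl

lemma TT_rot (m n : ℕ) (h k : ℤ) (p) :
    TT m n k (-h) (eRot p) = - UU m n h k p := by
  obtain ⟨a, b, c, d⟩ := p
  change TT m n k (-h) (-b, a, -d, c) = _
  rw [TT_mk, UU_mk]
  have e1 : (-b) * (-h) + a * k = a * k + b * h := by ring
  have e2 : (-d) * (-h) + c * k = c * k + d * h := by ring
  have e3 : (-b) * c - a * (-d) = a * d - b * c := by ring
  have e4 : (-b) * (-d) = b * d := by ring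
  rw [e1, e2, e3, e4, neg_mul, Int.sign_neg]
  split_ifs
  · push_cast; ring
  · simp

noncomputable def RR (m n : ℕ) (h k : ℤ) (p : ℤ × ℤ × ℤ × ℤ) : ℂ :=
  TT m n h k p + UU m n h k p

lemma UU_finite (m n : ℕ) (h k : ℤ) (hk : 0 < k) : (Function.support (UU m n h k)).Finite := by
  have : Function.support (UU m n h k) = eRot ⁻¹' (Function.support (TT m n k (-h))) := by
    ext p; simp [TT_rot]
  rw [this]
  exact (TT_finite m n k (-h) hk).preimage eRot.injective.injOn

lemma RR_finite (m n : ℕ) (h k : ℤ) (hh : 0 < h) (hk : 0 < k) :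
    (Function.support (RR m n h k)).Finite :=
  ((TT_finite m n h k hh).union (UU_finite m n h k hk)).subset (Function.support_add _ _)

lemma finsum_RR (m n : ℕ) (h k : ℤ) (hh : 0 < h) (hk : 0 < k) :
    ∑ᶠ p, TT m n h k p - ∑ᶠ p, TT m n k (-h) p = ∑ᶠ p, RR m n h k p := by
  rw [← finsum_comp_equiv eRot (f := TT m n k (-h))]
  simp only [TT_rot, finsum_neg_distrib, sub_neg_eq_add]
  exact (finsum_add_distrib (TT_finite m n h k hh) (UU_finite m n h k hk)).symm

lemma RR_generic (m n : ℕ) (h k : ℤ) (hh : 0 < h) (hk : 0 < k) (a b c d : ℤ)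
    (ha : a ≠ 0) (hb : b ≠ 0) (hc : c ≠ 0) (hd : d ≠ 0) : RR m n h k (a, b, c, d) = 0 := by
  simp only [RR, TT, UU]
  by_cases hdet : a * d - b * c = 1
  swap
  · simp [hdet]
  have hadbc : 0 < (a * d) * (b * c) := by
    have h1 : a * d ≠ 0 := mul_ne_zero ha hd
    have h2 : b * c ≠ 0 := mul_ne_zero hb hc
    rcases lt_or_gt_of_ne h2 with H | H
    · have : a * d < 0 := by omega
      exact mul_pos_of_neg_of_neg this H
    · have : 0 < a * d := by omega
      exact mul_pos this H
  set u := a * k + b * h with hu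
  set v := c * k + d * h with hv
  have iff1 : (a * c) * (u * v) < 0 ↔ (b * d) * (u * v) < 0 := by
    have key : 0 < (a * c) * (b * d) := by nlinarith
    have key2 : 0 ≤ ((a * c) * (u * v)) * ((b * d) * (u * v)) := by
      have : ((a * c) * (u * v)) * ((b * d) * (u * v)) = ((a * c) * (b * d)) * (u * v) ^ 2 := by
        ring
      rw [this]; positivity
    have hb : u * v ≠ 0 → (a * c) * (u * v) ≠ 0 ∧ (b * d) * (u * v) ≠ 0 := fun x =>
      ⟨mul_ne_zero (mul_ne_zero ha hc) x, mul_ne_zero (mul_ne_zero hb hd) x⟩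
    constructor
    · intro H
      have h0 : u * v ≠ 0 := by intro h0; simp [h0] at H
      by_contra H2
      have h3 : 0 < (b * d) * (u * v) := lt_of_le_of_ne (not_lt.1 H2) (hb h0).2.symm
      have := mul_neg_of_neg_of_pos H h3
      linarith
    · intro H
      have h0 : u * v ≠ 0 := by intro h0; simp [h0] at H
      by_contra H2
      have h3 : 0 < (a * c) * (u * v) := lt_of_le_of_ne (not_lt.1 H2) (hb h0).1.symm
      have := mul_neg_of_pos_of_neg h3 H
      linarith
  by_cases H : (a * c) * (u * v) < 0
  swap
  · rw [if_neg (fun x => H x.2), if_neg (fun x => H (iff1.2 x.2)), add_zero]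
  rw [if_pos ⟨hdet, H⟩, if_pos ⟨hdet, iff1.1 H⟩]
  have hab : a * b < 0 := by
    by_contra hab
    have hab : 0 < a * b := lt_of_le_of_ne (not_lt.1 hab) (mul_ne_zero ha hb).symm
    have hcd : 0 < c * d := by
      by_contra hcd
      push Not at hcd
      have := mul_nonneg hab.le (neg_nonneg.2 hcd)
      nlinarith
    have hau : 0 < a * u := by
      have : a * u = a ^ 2 * k + a * b * h := by rw [hu]; ring
      rw [this]; positivity
    have hcv : 0 < c * v := by
      have : c * v = c ^ 2 * k + c * d * h := by rw [hv]; ring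
      rw [this]; positivity
    have := mul_pos hau hcv
    nlinarith
  have : Int.sign (a * u) + Int.sign (b * u) = 0 := by
    rw [Int.sign_mul, Int.sign_mul]
    rcases mul_neg_iff.1 hab with ⟨h1, h2⟩ | ⟨h1, h2⟩
    · rw [Int.sign_eq_one_of_pos h1, Int.sign_eq_neg_one_of_neg h2]; ring
    · rw [Int.sign_eq_one_of_pos h2, Int.sign_eq_neg_one_of_neg h1]; ring
  rw [mul_assoc, mul_assoc, ← add_mul, ← Int.cast_add, this]; simp

lemma Bbar_add_one (m : ℕ) (x : ℚ) : Bbar m (x + 1) = Bbar m x := by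
  unfold Bbar; simp

lemma Bbar_neg (m : ℕ) (hm : Odd m) (h1 : 1 < m) (x : ℚ) : Bbar m (-x) = -Bbar m x := by
  unfold Bbar
  rw [← Rat.cast_neg]
  congr 1
  change Polynomial.eval (Int.fract (-x)) _ = - Polynomial.eval (Int.fract x) _
  by_cases H : Int.fract x = 0
  · rw [H, Int.fract_neg_eq_zero.2 H, Polynomial.bernoulli_eval_zero,
      bernoulli_eq_zero_of_odd hm h1]; simp
  · rw [Int.fract_neg H, Polynomial.bernoulli_eval_one_sub, hm.neg_one_pow]; ring

lemma bern_step (m : ℕ) (x : ℚ) (N : ℕ) : (Polynomial.bernoulli (m + 1)).eval x =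
    (Polynomial.bernoulli (m + 1)).eval (x - N) +
      (m + 1) * ∑ j ∈ Finset.range N, (x - (j + 1)) ^ m := by
  induction N with
  | zero => simp
  | succ N ih =>
    rw [ih, Finset.sum_range_succ]
    have := Polynomial.bernoulli_eval_one_add (m + 1) (x - (N + 1))
    rw [show 1 + (x - ((N : ℚ) + 1)) = x - N by ring] at this
    rw [this]
    push_cast
    ring

lemma Bpoly_eq (m : ℕ) (h k : ℤ) (hh : 0 < h) (hk : 0 < k) :
    Bpoly (m + 1) ((k : ℂ) / h) = Bbar (m + 1) ((k : ℚ) / h) +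
      (m + 1) * ∑ j ∈ Finset.range (k / h).toNat, ((k : ℂ) / h - (j + 1)) ^ m := by
  have e : Bpoly (m + 1) ((k : ℂ) / h) =
      (((Polynomial.bernoulli (m + 1)).eval ((k : ℚ) / h) : ℚ) : ℂ) := by
    unfold Bpoly
    have := Polynomial.aeval_algebraMap_apply ℂ ((k : ℚ) / h) (Polynomial.bernoulli (m + 1))
    simpa using this
  have f : (⌊(k : ℚ) / h⌋ : ℤ) = k / h := by
    lift h to ℕ using hh.le
    exact_mod_cast Rat.floor_intCast_div_natCast k h
  rw [e, bern_step m _ (k / h).toNat]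
  unfold Bbar
  have g : (((k / h).toNat : ℕ) : ℚ) = ((k / h : ℤ) : ℚ) := by
    have : 0 ≤ k / h := Int.ediv_nonneg hk.le hh.le
    exact_mod_cast congrArg (Int.cast : ℤ → ℚ) (Int.toNat_of_nonneg this)
  rw [f, g]
  push_cast
  rfl

lemma RR_neg (m n : ℕ) (hm : Even m) (hn : Even n) (h k : ℤ) (p) :
    RR m n h k (-p) = RR m n h k p := by
  obtain ⟨a, b, c, d⟩ := p
  change TT m n h k (-a, -b, -c, -d) + UU m n h k (-a, -b, -c, -d) = _ + _
  rw [TT_mk, UU_mk, TT_mk, UU_mk]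
  have e1 : (-a) * k + (-b) * h = -(a * k + b * h) := by ring
  have e2 : (-c) * k + (-d) * h = -(c * k + d * h) := by ring
  rw [e1, e2]
  simp only [neg_mul_neg, Int.cast_neg, hm.neg_pow, hn.neg_pow]

lemma sum_line (Q : ℤ × ℤ × ℤ × ℤ → ℂ) (f : ℤ → ℤ × ℤ × ℤ × ℤ) (g : ℤ → ℂ) (x y : ℤ)
    (hy : 0 < y) (hinj : Function.Injective f) (hdis : ∀ i j, f i ≠ -f j)
    (heven : ∀ p, Q (-p) = Q p)
    (hval : ∀ d, Q (f d) = if 0 < d ∧ d * y < x then g d else 0)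
    (hg : ∀ d, d * y = x → g d = 0)
    (hsupp : ∀ p, Q p ≠ 0 → ∃ d, p = f d ∨ p = -f d) :
    ∑ᶠ p, Q p = 2 * ∑ j ∈ Finset.range (x / y).toNat, g (j + 1) := by
  have hmem : ∀ d, Q (f d) ≠ 0 → ∃ j ∈ Finset.range (x / y).toNat, f d = f ((j : ℤ) + 1) := by
    intro d hd
    rw [hval] at hd
    have H : 0 < d ∧ d * y < x := by
      by_contra H; exact hd (if_neg H)
    have h1 : d ≤ x / y := (Int.le_ediv_iff_mul_le hy).2 H.2.le
    refine ⟨(d - 1).toNat, ?_, ?_⟩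
    · rw [Finset.mem_range]; omega
    · congr 1; omega
  set F : ℕ → ℤ × ℤ × ℤ × ℤ := fun j => f ((j : ℤ) + 1) with hF
  have hFi : Function.Injective F := by
    intro i j hij
    have := hinj hij
    omega
  set s := Finset.range (x / y).toNat with hs
  have hsub : Function.support Q ⊆ ((s.image F ∪ s.image (fun j => -F j) : Finset _) :
      Set (ℤ × ℤ × ℤ × ℤ)) := by
    intro p hp
    rw [Finset.mem_coe, Finset.mem_union, Finset.mem_image, Finset.mem_image]
    obtain ⟨d, rfl | rfl⟩ := hsupp p hp
    · left
      obtain ⟨j, hj, e⟩ := hmem d hp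
      exact ⟨j, hj, e.symm⟩
    · right
      have hp' : Q (f d) ≠ 0 := by rw [← heven]; exact hp
      obtain ⟨j, hj, e⟩ := hmem d hp'
      exact ⟨j, hj, by rw [e]⟩
  have hval' : ∀ j ∈ s, Q (F j) = g ((j : ℤ) + 1) := by
    intro j hj
    rw [hF]
    dsimp only
    rw [hval]
    rw [hs, Finset.mem_range] at hj
    have h1 : (j : ℤ) + 1 ≤ x / y := by omega
    have h2 := (Int.le_ediv_iff_mul_le hy).1 h1
    rcases h2.lt_or_eq with h3 | h3
    · rw [if_pos ⟨by omega, h3⟩]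
    · rw [if_neg (fun H => H.2.ne h3), hg _ h3]
  rw [finsum_eq_sum_of_support_subset _ hsub, Finset.sum_union, Finset.sum_image (hFi.injOn),
    Finset.sum_image (g := fun j => -F j) ((neg_injective.comp hFi).injOn)]
  · simp only [heven]
    rw [Finset.sum_congr rfl hval']; ring
  · rw [Finset.disjoint_left]
    intro p h1 h2
    rw [Finset.mem_image] at h1 h2
    obtain ⟨i, -, rfl⟩ := h1
    obtain ⟨j, -, e⟩ := h2
    exact hdis _ _ e.symm

lemma quad_iff (y x d : ℤ) (hy : 0 < y) (hx : 0 < x) (z : ℤ) (hz : z = y * (d * (d * y - x))) :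
    z < 0 ↔ 0 < d ∧ d * y < x := by
  subst hz
  constructor
  · intro H
    have H2 : d * (d * y - x) < 0 := by
      by_contra H2; have := mul_nonneg hy.le (not_lt.1 H2); linarith
    rcases mul_neg_iff.1 H2 with ⟨h1, h2⟩ | ⟨h1, h2⟩
    · exact ⟨h1, by linarith⟩
    · have := mul_neg_of_neg_of_pos h1 hy; linarith
  · rintro ⟨h1, h2⟩
    exact mul_neg_of_pos_of_neg hy (mul_neg_of_pos_of_neg h1 (by linarith))

lemma RR_A (m n : ℕ) (_hm : Even m) (_hn : Even n) (h k d : ℤ) (hh : 0 < h) (hk : 0 < k) :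
    RR m n h k (0, 1, -1, d) =
      if 0 < d ∧ d * h < k then (h : ℂ) ^ m * ((k : ℂ) - d * h) ^ n else 0 := by
  have hz : TT m n h k (0, 1, -1, d) = 0 := by
    rw [TT_mk, if_neg]; simp
  have hq := quad_iff h k d hh hk ((1 * d) * ((0 * k + 1 * h) * (-1 * k + d * h))) (by ring)
  rw [RR, hz, zero_add, UU_mk]
  by_cases H : 0 < d ∧ d * h < k
  · have hs : Int.sign ((1) * ((0) * k + (1) * h)) = 1 := by
      apply Int.sign_eq_one_of_pos; linarith
    rw [if_pos H, if_pos ⟨by norm_num, hq.2 H⟩, hs]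
    rw [← _hn.neg_pow ((k : ℂ) - d * h)]; push_cast; ring
  · rw [if_neg H, if_neg (fun t => H (hq.1 t.2))]

lemma RR_B (m n : ℕ) (_hm : Even m) (_hn : Even n) (h k d : ℤ) (hh : 0 < h) (hk : 0 < k) :
    RR m n h k (1, 0, -d, 1) =
      if 0 < d ∧ d * k < h then (k : ℂ) ^ m * ((h : ℂ) - d * k) ^ n else 0 := by
  have hz : UU m n h k (1, 0, -d, 1) = 0 := by
    rw [UU_mk, if_neg]; simp
  have hq := quad_iff k h d hk hh ((1 * -d) * ((1 * k + 0 * h) * (-d * k + 1 * h))) (by ring)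
  rw [RR, hz, add_zero, TT_mk]
  by_cases H : 0 < d ∧ d * k < h
  · have hs : Int.sign ((1) * ((1) * k + (0) * h)) = 1 := by
      apply Int.sign_eq_one_of_pos; linarith
    rw [if_pos H, if_pos ⟨by norm_num, hq.2 H⟩, hs]
    push_cast; ring
  · rw [if_neg H, if_neg (fun t => H (hq.1 t.2))]

lemma RR_C (m n : ℕ) (_hm : Even m) (_hn : Even n) (h k d : ℤ) (hh : 0 < h) (hk : 0 < k) :
    RR m n h k (1, -d, 0, 1) =
      if 0 < d ∧ d * h < k then -(((k : ℂ) - d * h) ^ m * (h : ℂ) ^ n) else 0 := by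
  have hz : TT m n h k (1, -d, 0, 1) = 0 := by
    rw [TT_mk, if_neg]; simp
  have hq := quad_iff h k d hh hk ((-d * 1) * ((1 * k + -d * h) * (0 * k + 1 * h))) (by ring)
  rw [RR, hz, zero_add, UU_mk]
  by_cases H : 0 < d ∧ d * h < k
  · have hs : Int.sign ((-d) * ((1) * k + (-d) * h)) = -1 := by
      apply Int.sign_eq_neg_one_of_neg; have := mul_neg_of_pos_of_neg H.1 (sub_neg.2 H.2); linarith
    rw [if_pos H, if_pos ⟨by norm_num, hq.2 H⟩, hs]
    push_cast; ring
  · rw [if_neg H, if_neg (fun t => H (hq.1 t.2))]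

lemma RR_D (m n : ℕ) (_hm : Even m) (_hn : Even n) (h k d : ℤ) (hh : 0 < h) (hk : 0 < k) :
    RR m n h k (d, -1, 1, 0) =
      if 0 < d ∧ d * k < h then -(((h : ℂ) - d * k) ^ m * (k : ℂ) ^ n) else 0 := by
  have hz : UU m n h k (d, -1, 1, 0) = 0 := by
    rw [UU_mk, if_neg]; simp
  have hq := quad_iff k h d hk hh ((d * 1) * ((d * k + -1 * h) * (1 * k + 0 * h))) (by ring)
  rw [RR, hz, add_zero, TT_mk]
  by_cases H : 0 < d ∧ d * k < h
  · have hs : Int.sign ((d) * ((d) * k + (-1) * h)) = -1 := by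
      apply Int.sign_eq_neg_one_of_neg; have := mul_neg_of_pos_of_neg H.1 (sub_neg.2 H.2); linarith
    rw [if_pos H, if_pos ⟨by norm_num, hq.2 H⟩, hs]
    rw [← _hm.neg_pow ((h : ℂ) - d * k)]; push_cast; ring
  · rw [if_neg H, if_neg (fun t => H (hq.1 t.2))]


lemma RR_det (m n : ℕ) (h k a b c d : ℤ) (H : RR m n h k (a, b, c, d) ≠ 0) :
    a * d - b * c = 1 := by
  by_contra hd
  apply H
  rw [RR, TT_mk, UU_mk, if_neg (fun x => hd x.1), if_neg (fun x => hd x.1), add_zero]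

lemma RR_two (m n : ℕ) (h k a b c d : ℤ) (h1 : a * c = 0) (h2 : b * d = 0) :
    RR m n h k (a, b, c, d) = 0 := by
  rw [RR, TT_mk, UU_mk, h1, h2]; simp

lemma RR_decomp (m n : ℕ) (h k : ℤ) (hh : 0 < h) (hk : 0 < k) (p : ℤ × ℤ × ℤ × ℤ) :
    RR m n h k p = (((if p.1 = 0 then RR m n h k p else 0) +
      (if p.2.1 = 0 then RR m n h k p else 0)) +
      (if p.2.2.1 = 0 then RR m n h k p else 0)) +
      (if p.2.2.2 = 0 then RR m n h k p else 0) := by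
  obtain ⟨a, b, c, d⟩ := p
  by_cases H : RR m n h k (a, b, c, d) = 0
  · simp [H]
  have hdet := RR_det m n h k a b c d H
  have h2 := fun x y => H (RR_two m n h k a b c d x y)
  have h4 := fun x y z t => H (RR_generic m n h k hh hk a b c d x y z t)
  dsimp only
  by_cases ha : a = 0 <;> by_cases hb : b = 0 <;> by_cases hc : c = 0 <;> by_cases hd : d = 0 <;>
    first
    | (exfalso; subst_vars; simp at hdet; done)
    | (exfalso; exact h4 ha hb hc hd)
    | (simp [ha, hb, hc, hd]; done)
    | (exfalso; exact h2 (by simp [*]) (by simp [*]))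

lemma ite_finite (m n : ℕ) (h k : ℤ) (hh : 0 < h) (hk : 0 < k) (c : ℤ × ℤ × ℤ × ℤ → ℤ) :
    (Function.support (fun p => if c p = 0 then RR m n h k p else 0)).Finite := by
  apply (RR_finite m n h k hh hk).subset
  intro p hp hp2
  apply hp
  simp [hp2]

lemma pm_one (x y : ℤ) (h : x * y = 1) : (x = 1 ∧ y = 1) ∨ (x = -1 ∧ y = -1) :=
  Int.mul_eq_one_iff_eq_one_or_neg_one.1 h

lemma finsum_RR_eq (m n : ℕ) (hm : Even m) (hn : Even n) (hm0 : m ≠ 0) (hn0 : n ≠ 0)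
    (h k : ℤ) (hh : 0 < h) (hk : 0 < k) :
    ∑ᶠ p, RR m n h k p =
      2 * (∑ j ∈ Finset.range (k / h).toNat, (h : ℂ) ^ m * ((k : ℂ) - ((j : ℤ) + 1 : ℤ) * h) ^ n) +
      2 * (∑ j ∈ Finset.range (h / k).toNat, (k : ℂ) ^ m * ((h : ℂ) - ((j : ℤ) + 1 : ℤ) * k) ^ n) +
      2 * (∑ j ∈ Finset.range (k / h).toNat,
        -(((k : ℂ) - ((j : ℤ) + 1 : ℤ) * h) ^ m * (h : ℂ) ^ n)) +
      2 * (∑ j ∈ Finset.range (h / k).toNat,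
        -(((h : ℂ) - ((j : ℤ) + 1 : ℤ) * k) ^ m * (k : ℂ) ^ n)) := by
  have fA := ite_finite m n h k hh hk (fun p => p.1)
  have fB := ite_finite m n h k hh hk (fun p => p.2.1)
  have fC := ite_finite m n h k hh hk (fun p => p.2.2.1)
  have fD := ite_finite m n h k hh hk (fun p => p.2.2.2)
  have fAB := (fA.union fB).subset (Function.support_add _ _)
  have fABC := (fAB.union fC).subset (Function.support_add _ _)
  rw [finsum_congr (RR_decomp m n h k hh hk), finsum_add_distrib fABC fD,
    finsum_add_distrib fAB fC, finsum_add_distrib fA fB]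
  have gz : ∀ (x y d : ℤ), d * y = x → (x : ℂ) - d * y = 0 := by
    intro x y d e; rw [← e]; push_cast; ring
  congr 1
  · congr 1
    · congr 1
      · refine sum_line _ (fun d => (0, 1, -1, d))
          (fun d => (h : ℂ) ^ m * ((k : ℂ) - d * h) ^ n) k h hh ?_ ?_ ?_ ?_ ?_ ?_
        · intro i j e; simpa using e
        · intro i j e; simp [Prod.ext_iff] at e
        · intro p; simp [RR_neg m n hm hn]
        · intro d; simpa using RR_A m n hm hn h k d hh hk
        · intro d e; simp [gz k h d e, hn0]
        · rintro ⟨a, b, c, d⟩ hp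
          simp only [ne_eq, ite_eq_right_iff, Classical.not_imp] at hp
          have hdet := RR_det m n h k a b c d hp.2
          rcases pm_one b (-c) (by rw [hp.1] at hdet; linarith) with ⟨e1, e2⟩ | ⟨e1, e2⟩
          · exact ⟨d, Or.inl (by simp [Prod.ext_iff]; omega)⟩
          · exact ⟨-d, Or.inr (by simp [Prod.ext_iff]; omega)⟩
      · refine sum_line _ (fun d => (1, 0, -d, 1))
          (fun d => (k : ℂ) ^ m * ((h : ℂ) - d * k) ^ n) h k hk ?_ ?_ ?_ ?_ ?_ ?_
        · intro i j e; simpa using e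
        · intro i j e; simp [Prod.ext_iff] at e
        · intro p; simp [RR_neg m n hm hn]
        · intro d; simpa using RR_B m n hm hn h k d hh hk
        · intro d e; simp [gz h k d e, hn0]
        · rintro ⟨a, b, c, d⟩ hp
          simp only [ne_eq, ite_eq_right_iff, Classical.not_imp] at hp
          have hdet := RR_det m n h k a b c d hp.2
          rcases pm_one a d (by rw [hp.1] at hdet; linarith) with ⟨e1, e2⟩ | ⟨e1, e2⟩
          · exact ⟨-c, Or.inl (by simp [Prod.ext_iff]; omega)⟩
          · exact ⟨c, Or.inr (by simp [Prod.ext_iff]; omega)⟩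
    · refine sum_line _ (fun d => (1, -d, 0, 1))
        (fun d => -(((k : ℂ) - d * h) ^ m * (h : ℂ) ^ n)) k h hh ?_ ?_ ?_ ?_ ?_ ?_
      · intro i j e; simpa using e
      · intro i j e; simp [Prod.ext_iff] at e
      · intro p; simp [RR_neg m n hm hn]
      · intro d; simpa using RR_C m n hm hn h k d hh hk
      · intro d e; simp [gz k h d e, hm0]
      · rintro ⟨a, b, c, d⟩ hp
        simp only [ne_eq, ite_eq_right_iff, Classical.not_imp] at hp
        have hdet := RR_det m n h k a b c d hp.2
        rcases pm_one a d (by rw [hp.1] at hdet; linarith) with ⟨e1, e2⟩ | ⟨e1, e2⟩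
        · exact ⟨-b, Or.inl (by simp [Prod.ext_iff]; omega)⟩
        · exact ⟨b, Or.inr (by simp [Prod.ext_iff]; omega)⟩
  · refine sum_line _ (fun d => (d, -1, 1, 0))
      (fun d => -(((h : ℂ) - d * k) ^ m * (k : ℂ) ^ n)) h k hk ?_ ?_ ?_ ?_ ?_ ?_
    · intro i j e; simpa using e
    · intro i j e; simp [Prod.ext_iff] at e
    · intro p; simp [RR_neg m n hm hn]
    · intro d; simpa using RR_D m n hm hn h k d hh hk
    · intro d e; simp [gz h k d e, hm0]
    · rintro ⟨a, b, c, d⟩ hp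
      simp only [ne_eq, ite_eq_right_iff, Classical.not_imp] at hp
      have hdet := RR_det m n h k a b c d hp.2
      rcases pm_one c (-b) (by rw [hp.1] at hdet; linarith) with ⟨e1, e2⟩ | ⟨e1, e2⟩
      · exact ⟨a, Or.inl (by simp [Prod.ext_iff]; omega)⟩
      · exact ⟨-a, Or.inr (by simp [Prod.ext_iff]; omega)⟩

lemma Bpoly_term (w m n : ℕ) (hw : w = m + n) (h k : ℤ) (hh : 0 < h) (hk : 0 < k) :
    Bpoly (n + 1) ((k : ℂ) / h) / ((n : ℂ) + 1) * (h : ℂ) ^ w =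
      Bbar (n + 1) ((k : ℚ) / h) / ((n : ℂ) + 1) * (h : ℂ) ^ w +
      ∑ j ∈ Finset.range (k / h).toNat, (h : ℂ) ^ m * ((k : ℂ) - ((j : ℤ) + 1 : ℤ) * h) ^ n := by
  have hn1 : (n : ℂ) + 1 ≠ 0 := by exact_mod_cast Nat.succ_ne_zero n
  have hh1 : (h : ℂ) ≠ 0 := by exact_mod_cast hh.ne'
  have e : ∑ j ∈ Finset.range (k / h).toNat,
        (h : ℂ) ^ m * ((k : ℂ) - ((j : ℤ) + 1 : ℤ) * h) ^ n =
      (∑ j ∈ Finset.range (k / h).toNat, ((k : ℂ) / h - (j + 1)) ^ n) * (h : ℂ) ^ w := by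
    rw [Finset.sum_mul]
    apply Finset.sum_congr rfl
    intro j _
    have : (k : ℂ) - ((j : ℤ) + 1 : ℤ) * h = ((k : ℂ) / h - (j + 1)) * h := by
      push_cast; field_simp
    rw [this, mul_pow, hw, pow_add]; ring
  rw [e, Bpoly_eq n h k hh hk]
  field_simp

/-- For even `n` with `0 < n < w`, `E_{w,n}` is an odd weighted Dedekind symbol of
weight `w` with reciprocity law `E_{w,n}(h,k) − E_{w,n}(k,−h) = S_{w,n}(h,k)`. -/
theorem EwnEven_isOddDedekindSymbol (w n : ℕ) (hw : Even w) (hw0 : 0 < w)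
    (hn : Even n) (hn0 : 0 < n) (hnw : n < w) :
    (∀ h k : ℤ, 0 < h → EwnEven w n h (k + h) = EwnEven w n h k) ∧
    (∀ h k c : ℤ, 0 < h → 0 < c →
      EwnEven w n (c * h) (c * k) = (c : ℂ) ^ w * EwnEven w n h k) ∧
    (∀ h k : ℤ, 0 < h → EwnEven w n h (-k) = -EwnEven w n h k) ∧
    (∀ h k : ℤ, 0 < h → 0 < k →
      EwnEven w n h k - EwnEven w n k (-h) = SwnEven w n h k) := by
  obtain ⟨m, rfl⟩ : ∃ m, w = m + n := ⟨w - n, by omega⟩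
  have hm : Even m := by
    rw [Nat.even_add] at hw; exact hw.2 hn
  have hm0 : 0 < m := by omega
  have hodd : ∀ x, Bbar (n + 1) (-x) = - Bbar (n + 1) x :=
    Bbar_neg _ hn.add_one (by omega)
  have hodd' : ∀ x, Bbar (m + 1) (-x) = - Bbar (m + 1) x :=
    Bbar_neg _ hm.add_one (by omega)
  refine ⟨?_, ?_, ?_, ?_⟩
  · intro h k hh
    have hq : (h : ℚ) ≠ 0 := by exact_mod_cast hh.ne'
    have e : ((k + h : ℤ) : ℚ) / h = (k : ℚ) / h + 1 := by push_cast; field_simp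
    simp only [EwnEven, Iwn_eq _ _ _ _ hh, Nat.add_sub_cancel, e, Bbar_add_one, TT_shift]
    rw [finsum_comp_equiv eShift (f := TT m n h k)]
  · intro h k c hh hc
    have hq : (h : ℚ) ≠ 0 := by exact_mod_cast hh.ne'
    have hcq : (c : ℚ) ≠ 0 := by exact_mod_cast hc.ne'
    have e : ((c * k : ℤ) : ℚ) / ((c * h : ℤ) : ℚ) = (k : ℚ) / h := by push_cast; field_simp
    simp only [EwnEven, Iwn_eq _ _ _ _ hh, Iwn_eq _ _ _ _ (mul_pos hc hh), Nat.add_sub_cancel, e,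
      TT_scale _ _ _ _ _ hc]
    rw [← mul_finsum, Int.cast_mul, mul_pow]
    ring
  · intro h k hh
    have e : ((-k : ℤ) : ℚ) / h = -((k : ℚ) / h) := by push_cast; ring
    simp only [EwnEven, Iwn_eq _ _ _ _ hh, Nat.add_sub_cancel, e, hodd, hodd', TT_refl _ _ hm]
    rw [finsum_neg_distrib, finsum_comp_equiv eRefl (f := TT m n h k)]
    ring
  · intro h k hh hk
    have e : ((-h : ℤ) : ℚ) / k = -((h : ℚ) / k) := by push_cast; ring
    have key := finsum_RR m n h k hh hk
    rw [finsum_RR_eq m n hm hn hm0.ne' hn0.ne' h k hh hk] at key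
    simp only [EwnEven, SwnEven, Iwn_eq _ _ _ _ hh, Iwn_eq _ _ _ _ hk, Nat.add_sub_cancel, e,
      hodd, hodd']
    rw [Bpoly_term (m + n) m n rfl h k hh hk, Bpoly_term (m + n) m n rfl k h hk hh,
      Bpoly_term (m + n) n m (add_comm _ _) h k hh hk,
      Bpoly_term (m + n) n m (add_comm _ _) k h hk hh]
    simp only [Finset.sum_neg_distrib, mul_comm (_ ^ m) ((h : ℂ) ^ n),
      mul_comm (_ ^ m) ((k : ℂ) ^ n)] at key
    linear_combination (1 / 2 : ℂ) * key
end
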